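/- arXiv:2307.11533 — 6 statements merged into one kernel-verified Lean document; each statement's English description precedes it below -/
import Mathlib

section
/- Let f : [0,1] → ℝ be α-Hölder continuous with α ∈ (0,1] and constant L > 0, i.e., |f(x) − f(y)| ≤ L|x − y|^α for all x, y ∈ [0,1]. Then for every n ∈ ℕ with n ≥ 1 and every x ∈ [0,1], the Bernstein polynomial satisfies |f(x) − B_n(f;x)| ≤ L · (x(1−x)/n)^{α/2}. -/
theorem sum_bernstein_weights (n : ℕ) (x : ℝ) :
    ∑ k ∈ Finset.range (n + 1), (n.choose k : ℝ) * x ^ k * (1 - x) ^ (n - k) = 1 := by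
  simpa [bernsteinPolynomial, Polynomial.eval_finsetSum] using
    congrArg (Polynomial.eval x) (bernsteinPolynomial.sum ℝ n)

theorem sum_bernstein_weights_mul_sq {n : ℕ} (hn : n ≠ 0) (x : ℝ) :
    ∑ k ∈ Finset.range (n + 1),
      ((n.choose k : ℝ) * x ^ k * (1 - x) ^ (n - k)) * (x - (k : ℝ) / n) ^ 2
        = x * (1 - x) / n := by
  have hn' : (n : ℝ) ≠ 0 := Nat.cast_ne_zero.mpr hn
  have h := congrArg (Polynomial.eval x) (bernsteinPolynomial.variance ℝ n)
  simp only [bernsteinPolynomial, Polynomial.eval_finsetSum, Polynomial.eval_mul,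
    Polynomial.eval_pow, Polynomial.eval_sub, Polynomial.eval_natCast, Polynomial.eval_X,
    Polynomial.eval_one, nsmul_eq_mul] at h
  have hdiv : x * (1 - x) / n = (n * x * (1 - x)) / (n : ℝ) ^ 2 := by
    field_simp
  rw [hdiv, ← h, Finset.sum_div]
  refine Finset.sum_congr rfl fun k _ => ?_
  field_simp

/-- Bernstein approximation error for `α`-Hölder continuous functions on `[0,1]`:
`|f(x) - B_n(f;x)| ≤ L * (x(1-x)/n)^(α/2)`. -/
theorem bernstein_approx_holder
    (f : ℝ → ℝ) (L α : ℝ) (hL : 0 < L) (hα : 0 < α) (hα1 : α ≤ 1)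
    (hf : ∀ x y : ℝ, x ∈ Set.Icc (0:ℝ) 1 → y ∈ Set.Icc (0:ℝ) 1 →
      |f x - f y| ≤ L * |x - y| ^ α)
    (n : ℕ) (hn : 1 ≤ n) (x : ℝ) (hx : x ∈ Set.Icc (0:ℝ) 1) :
    |f x - ∑ k ∈ Finset.range (n + 1),
        f ((k : ℝ) / n) * ((n.choose k : ℝ) * x ^ k * (1 - x) ^ (n - k))|
      ≤ L * (x * (1 - x) / n) ^ (α / 2) := by
  have hn0 : n ≠ 0 := Nat.one_le_iff_ne_zero.mp hn
  set w : ℕ → ℝ := fun k => (n.choose k : ℝ) * x ^ k * (1 - x) ^ (n - k)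
  have hw : ∀ k, 0 ≤ w k := fun k =>
    mul_nonneg (mul_nonneg (Nat.cast_nonneg _) (pow_nonneg hx.1 _))
      (pow_nonneg (sub_nonneg.mpr hx.2) _)
  have hw1 : ∑ k ∈ Finset.range (n + 1), w k = 1 := sum_bernstein_weights n x
  have hterm : ∀ k ∈ Finset.range (n + 1),
      |w k * (f x - f ((k : ℝ) / n))| ≤ L * (w k * ((x - (k : ℝ) / n) ^ 2) ^ (α / 2)) := by
    intro k hk
    have hkn : (k : ℝ) ≤ n := by exact_mod_cast Finset.mem_range_succ_iff.mp hk
    have hmem : (k : ℝ) / n ∈ Set.Icc (0 : ℝ) 1 :=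
      ⟨by positivity, div_le_one_of_le₀ hkn (Nat.cast_nonneg n)⟩
    have hpow : ((x - (k : ℝ) / n) ^ 2) ^ (α / 2) = |x - (k : ℝ) / n| ^ α := by
      rw [← sq_abs, ← Real.rpow_natCast_mul (abs_nonneg _)]
      congr 1
      push_cast
      ring
    rw [abs_mul, abs_of_nonneg (hw k), hpow, mul_left_comm]
    exact mul_le_mul_of_nonneg_left (hf _ _ hx hmem) (hw k)
  have hJensen := (Real.concaveOn_rpow (p := α / 2) (by linarith) (by linarith)).le_map_sum
    (t := Finset.range (n + 1)) (w := w) (p := fun k => (x - (k : ℝ) / n) ^ 2)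
    (fun k _ => hw k) hw1 (fun k _ => Set.mem_Ici.mpr (sq_nonneg _))
  simp only [smul_eq_mul] at hJensen
  calc |f x - ∑ k ∈ Finset.range (n + 1), f ((k : ℝ) / n) * w k|
      = |∑ k ∈ Finset.range (n + 1), w k * (f x - f ((k : ℝ) / n))| := by
        simp only [mul_comm (w _), sub_mul, Finset.sum_sub_distrib, ← Finset.mul_sum, hw1, mul_one]
    _ ≤ ∑ k ∈ Finset.range (n + 1), L * (w k * ((x - (k : ℝ) / n) ^ 2) ^ (α / 2)) :=
        (Finset.abs_sum_le_sum_abs _ _).trans (Finset.sum_le_sum hterm)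
    _ ≤ L * (x * (1 - x) / n) ^ (α / 2) := by
        rw [← Finset.mul_sum, ← sum_bernstein_weights_mul_sq hn0 x]
        exact mul_le_mul_of_nonneg_left hJensen hL.le
end

section
/- Let n ≥ 1 be a natural number, x ∈ (0,∞), and let p : ℕ → [0,∞) be a probability mass function on ℕ (∑_{k=0}^∞ p(k) = 1) of a random variable K with E[K] = ∑_{k=0}^∞ k·p(k) = n·x and finite variance Var[K] = ∑_{k=0}^∞ (k − nx)²·p(k) < ∞. If f : [0,∞) → ℝ satisfies the general Hölder-type condition |f(x) − f(y)| ≤ L|x − y|^α/(γ + x + y)^β for all x, y ∈ [0,∞), with constants L > 0, α ∈ (0,1], β, γ ∈ [0,∞), then the approximation scheme S_n(f;x) := ∑_{k=0}^∞ f(k/n) p(k) satisfies |f(x) − S_n(f;x)| ≤ (L/n^α) · (Var[K])^{α/2}/(γ + x)^β. -/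
/-- Jensen's inequality for the concave function `t ↦ t ^ s`, `0 < s < 1`, with respect to a
discrete probability distribution `w`. -/
theorem summable_and_tsum_rpow_mul_le {ι : Type*} {w t : ι → ℝ} (hw : ∀ i, 0 ≤ w i)
    (hw1 : HasSum w 1) (ht : ∀ i, 0 ≤ t i) (hs : Summable fun i => t i * w i)
    {s : ℝ} (hs0 : 0 < s) (hs1 : s < 1) :
    (Summable fun i => t i ^ s * w i) ∧ ∑' i, t i ^ s * w i ≤ (∑' i, t i * w i) ^ s := by
  have hs1' : 0 < 1 - s := sub_pos.2 hs1
  have hpq : (s⁻¹).HolderConjugate (1 - s)⁻¹ := .inv_one_sub_inv hs0 hs1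
  have hA : ∀ i, ((t i * w i) ^ s) ^ s⁻¹ = t i * w i := fun i =>
    Real.rpow_rpow_inv (mul_nonneg (ht i) (hw i)) hs0.ne'
  have hB : ∀ i, (w i ^ (1 - s)) ^ (1 - s)⁻¹ = w i := fun i =>
    Real.rpow_rpow_inv (hw i) hs1'.ne'
  have hAB : ∀ i, (t i * w i) ^ s * w i ^ (1 - s) = t i ^ s * w i := fun i => by
    rw [Real.mul_rpow (ht i) (hw i), mul_assoc,
      ← Real.rpow_add_of_nonneg (hw i) hs0.le hs1'.le, add_sub_cancel, Real.rpow_one]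
  have key := Real.summable_and_inner_le_Lp_mul_Lq_tsum_of_nonneg hpq
    (f := fun i => (t i * w i) ^ s) (g := fun i => w i ^ (1 - s))
    (fun i => Real.rpow_nonneg (mul_nonneg (ht i) (hw i)) _)
    (fun i => Real.rpow_nonneg (hw i) _)
    (by simpa only [hA] using hs) (by simpa only [hB] using hw1.summable)
  simpa only [hA, hB, hAB, hw1.tsum_eq, one_div, inv_inv, Real.one_rpow, mul_one] using key

/-- Error bound for the general approximation scheme `S_n(f;x) = ∑_{k} f(k/n) p(k)` built from a
probability mass function `p` on `ℕ` with mean `n·x` and finite variance, for a function `f`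
satisfying the general Hölder-type condition:
`|f(x) - S_n(f;x)| ≤ (L / n^α) · Var[K]^(α/2) / (γ + x)^β`. -/
theorem approx_scheme_general_holder
    (n : ℕ) (hn : 1 ≤ n) (x : ℝ) (hx : 0 < x)
    (p : ℕ → ℝ) (hp : ∀ k, 0 ≤ p k) (hp1 : ∑' k, p k = 1)
    (hmean : ∑' (k : ℕ), (k : ℝ) * p k = n * x)
    (hVsum : Summable fun k : ℕ => ((k : ℝ) - n * x) ^ 2 * p k)
    (f : ℝ → ℝ) (L α β γ : ℝ) (hL : 0 < L) (hα : 0 < α) (hα1 : α ≤ 1)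
    (hβ : 0 ≤ β) (hγ : 0 ≤ γ)
    (hf : ∀ y z : ℝ, 0 ≤ y → 0 ≤ z →
      |f y - f z| ≤ L * |y - z| ^ α / (γ + y + z) ^ β) :
    |f x - ∑' (k : ℕ), f ((k : ℝ) / n) * p k|
      ≤ L / (n : ℝ) ^ α * (∑' (k : ℕ), ((k : ℝ) - n * x) ^ 2 * p k) ^ (α / 2) / (γ + x) ^ β := by
  have hn0 : (0 : ℝ) < n := by exact_mod_cast hn
  have hpS : HasSum p 1 := by
    refine hp1 ▸ Summable.hasSum ?_
    by_contra h
    simp [tsum_eq_zero_of_not_summable h] at hp1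
  obtain ⟨hS, hle⟩ := summable_and_tsum_rpow_mul_le hp hpS
    (t := fun k : ℕ => ((k : ℝ) - n * x) ^ 2) (fun _ => sq_nonneg _) hVsum
    (s := α / 2) (by linarith) (by linarith)
  set C : ℝ := L / (n : ℝ) ^ α / (γ + x) ^ β with hC
  have hγx : 0 < γ + x := by linarith
  have hC0 : 0 ≤ C := by positivity
  have hbound : ∀ k : ℕ, ‖(f x - f ((k : ℝ) / n)) * p k‖
      ≤ C * ((((k : ℝ) - n * x) ^ 2) ^ (α / 2) * p k) := fun k => by
    have hk : (0 : ℝ) ≤ (k : ℝ) / n := by positivity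
    have hdist : |x - (k : ℝ) / n| ^ α = (((k : ℝ) - n * x) ^ 2) ^ (α / 2) / (n : ℝ) ^ α := by
      have habs : |x - (k : ℝ) / n| = |(k : ℝ) - n * x| / n := by
        rw [abs_sub_comm, div_sub' hn0.ne', abs_div, abs_of_pos hn0]
      have hexp : ((2 : ℕ) : ℝ) * (α / 2) = α := by
        push_cast
        ring
      rw [habs, Real.div_rpow (abs_nonneg _) hn0.le, ← sq_abs ((k : ℝ) - n * x),
        ← Real.rpow_natCast, ← Real.rpow_mul (abs_nonneg _), hexp]
    rw [norm_mul, Real.norm_eq_abs, Real.norm_of_nonneg (hp k), ← mul_assoc]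
    refine mul_le_mul_of_nonneg_right ?_ (hp k)
    calc |f x - f ((k : ℝ) / n)|
        ≤ L * |x - (k : ℝ) / n| ^ α / (γ + x + (k : ℝ) / n) ^ β := hf _ _ hx.le hk
      _ ≤ L * |x - (k : ℝ) / n| ^ α / (γ + x) ^ β := by
        gcongr _ / ?_ ^ β
        exact le_add_of_nonneg_right hk
      _ = C * (((k : ℝ) - n * x) ^ 2) ^ (α / 2) := by
        rw [hdist, hC]
        ring
  have hdiff : Summable fun k : ℕ => (f x - f ((k : ℝ) / n)) * p k :=
    Summable.of_norm_bounded (hS.mul_left C) hbound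
  have hconst : HasSum (fun k => f x * p k) (f x) := by simpa using hpS.mul_left (f x)
  have hscheme : f x - ∑' k : ℕ, f ((k : ℝ) / n) * p k
      = ∑' k : ℕ, (f x - f ((k : ℝ) / n)) * p k := by
    have h := (hconst.sub hdiff.hasSum).tsum_eq
    simp only [← sub_mul, sub_sub_cancel] at h
    rw [h, sub_sub_cancel]
  calc |f x - ∑' k : ℕ, f ((k : ℝ) / n) * p k|
      = ‖∑' k : ℕ, (f x - f ((k : ℝ) / n)) * p k‖ := by rw [hscheme, Real.norm_eq_abs]
    _ ≤ C * ∑' k : ℕ, (((k : ℝ) - n * x) ^ 2) ^ (α / 2) * p k :=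
      tsum_of_norm_bounded (hS.hasSum.mul_left C) hbound
    _ ≤ C * (∑' k : ℕ, ((k : ℝ) - n * x) ^ 2 * p k) ^ (α / 2) :=
      mul_le_mul_of_nonneg_left hle hC0
    _ = _ := by
      rw [hC]
      ring
end

section
/- Let f : [0,∞) → ℝ satisfy the general Hölder-type condition |f(x) − f(y)| ≤ L|x − y|^α/(γ + x + y)^β for all x, y ∈ [0,∞), with L > 0, α ∈ (0,1], β, γ ∈ [0,∞). Then for all n ≥ 1 and all x ∈ (0,∞), the Szász-Mirakjan operator satisfies |f(x) − S_n(f;x)| ≤ (L/n^{α/2}) · x^{α/2}/(γ + x)^β. -/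
lemma HasSum.congr_of_eq {ι M : Type*} [AddCommMonoid M] [TopologicalSpace M]
    {u v : ι → M} {a b : M} (h : HasSum u a) (huv : ∀ k, v k = u k) (hab : b = a) : HasSum v b := by
  rwa [hab, funext huv]

/-- Weights of the Poisson distribution with parameter `r`. -/
noncomputable def poissonWeight (r : ℝ) (k : ℕ) : ℝ :=
  Real.exp (-r) * r ^ k / k.factorial

lemma poissonWeight_nonneg {r : ℝ} (hr : 0 ≤ r) (k : ℕ) : 0 ≤ poissonWeight r k := by
  unfold poissonWeight
  positivity

lemma hasSum_poissonWeight (r : ℝ) : HasSum (poissonWeight r) 1 := by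
  have h := (NormedSpace.expSeries_div_hasSum_exp r).mul_left (Real.exp (-r))
  rw [← Real.exp_eq_exp_ℝ, ← Real.exp_add, neg_add_cancel, Real.exp_zero] at h
  exact h.congr_of_eq (fun k ↦ mul_div_assoc _ _ _) rfl

lemma succ_mul_poissonWeight_succ (r : ℝ) (k : ℕ) :
    ((k : ℝ) + 1) * poissonWeight r (k + 1) = r * poissonWeight r k := by
  have hk : (k.factorial : ℝ) ≠ 0 := by positivity
  have hk' : (k : ℝ) + 1 ≠ 0 := by positivity
  simp only [poissonWeight, Nat.factorial_succ, Nat.cast_mul, Nat.cast_add, Nat.cast_one]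
  field_simp
  ring

/-- Stein's identity for the Poisson distribution: `E[N g(N - 1)] = r E[g(N)]`. -/
lemma hasSum_mul_poissonWeight_stein {r a : ℝ} {g : ℝ → ℝ}
    (hg : HasSum (fun k : ℕ ↦ g k * poissonWeight r k) a) :
    HasSum (fun k : ℕ ↦ k * g (k - 1) * poissonWeight r k) (r * a) := by
  rw [← hasSum_nat_add_iff' 1]
  refine HasSum.congr_of_eq (hg.mul_left r) (fun k ↦ ?_) ?_
  · push_cast
    rw [add_sub_cancel_right]
    linear_combination g k * succ_mul_poissonWeight_succ r k
  · simp

lemma hasSum_sub_sq_mul_poissonWeight (r : ℝ) :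
    HasSum (fun k : ℕ ↦ ((k : ℝ) - r) ^ 2 * poissonWeight r k) r := by
  have h₀ := hasSum_poissonWeight r
  have h₁ := hasSum_mul_poissonWeight_stein (g := fun _ ↦ 1) (by simpa using h₀)
  have h₂ := hasSum_mul_poissonWeight_stein (g := id) (by simpa using h₁)
  refine HasSum.congr_of_eq ((h₂.add (h₁.mul_left (1 - 2 * r))).add (h₀.mul_left (r ^ 2)))
    (fun k ↦ ?_) ?_
  · simp only [id]
    ring
  · ring

/-- The tangent line of `u ↦ u ^ (α / 2)` at `m`, evaluated at `u = d ^ 2`, bounds `|d| ^ α`. -/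
lemma abs_rpow_le_tangent {α m : ℝ} (hα : 0 ≤ α) (hα2 : α ≤ 2) (hm : 0 < m) (d : ℝ) :
    |d| ^ α ≤ m ^ (α / 2) * (1 + α / 2 * (d ^ 2 / m - 1)) := by
  have hd : |d| ^ α = m ^ (α / 2) * (1 + (d ^ 2 / m - 1)) ^ (α / 2) := by
    rw [add_sub_cancel, ← Real.mul_rpow hm.le (by positivity), mul_div_cancel₀ _ hm.ne',
      ← sq_abs, ← Real.rpow_natCast, ← Real.rpow_mul (abs_nonneg d)]
    congr 1
    push_cast
    ring
  have hs : -1 ≤ d ^ 2 / m - 1 := by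
    have : 0 ≤ d ^ 2 / m := by positivity
    linarith
  rw [hd]
  gcongr
  exact rpow_one_add_le_one_add_mul_self hs (by linarith) (by linarith)

/-- Error bound for the Szász-Mirakjan operator for a function satisfying the general
Hölder-type condition: `|f(x) - S_n(f;x)| ≤ (L / n^(α/2)) · x^(α/2) / (γ + x)^β`. -/
theorem szasz_mirakjan_general_holder
    (f : ℝ → ℝ) (L α β γ : ℝ) (hL : 0 < L) (hα : 0 < α) (hα1 : α ≤ 1)
    (hβ : 0 ≤ β) (hγ : 0 ≤ γ)
    (hf : ∀ y z : ℝ, 0 ≤ y → 0 ≤ z →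
      |f y - f z| ≤ L * |y - z| ^ α / (γ + y + z) ^ β)
    (n : ℕ) (hn : 1 ≤ n) (x : ℝ) (hx : 0 < x) :
    |f x - ∑' (k : ℕ), f ((k : ℝ) / n) * (Real.exp (-(n * x)) * (n * x) ^ k / k.factorial)|
      ≤ L / (n : ℝ) ^ (α / 2) * x ^ (α / 2) / (γ + x) ^ β := by
  have hn0 : (0 : ℝ) < n := by exact_mod_cast hn
  change |f x - ∑' k : ℕ, f ((k : ℝ) / n) * poissonWeight (n * x) k| ≤ _
  have hw₀ := poissonWeight_nonneg (mul_pos hn0 hx).le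
  have hw := hasSum_poissonWeight (n * x)
  set w := poissonWeight (n * x) with hw_def
  set m := x / n with hm_def
  have hm : 0 < m := div_pos hx hn0
  set C := L * m ^ (α / 2) / (γ + x) ^ β with hC_def
  have hC : L / (n : ℝ) ^ (α / 2) * x ^ (α / 2) / (γ + x) ^ β = C := by
    rw [hC_def, hm_def, Real.div_rpow hx.le hn0.le]
    ring
  rw [hC]
  have hvar : HasSum (fun k : ℕ ↦ (x - (k : ℝ) / n) ^ 2 / m * w k) 1 := by
    refine HasSum.congr_of_eq ((hasSum_sub_sq_mul_poissonWeight (n * x)).mul_left (1 / (n * x)))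
      (fun k ↦ ?_) ?_
    · rw [hm_def, hw_def]
      field_simp
      ring
    · field_simp
  have hbound : ∀ k : ℕ, ‖(f x - f ((k : ℝ) / n)) * w k‖ ≤
      C * ((1 - α / 2) * w k + α / 2 * ((x - (k : ℝ) / n) ^ 2 / m * w k)) := by
    intro k
    have hk : (0 : ℝ) ≤ (k : ℝ) / n := by positivity
    rw [norm_mul, Real.norm_eq_abs, Real.norm_of_nonneg (hw₀ k)]
    calc |f x - f ((k : ℝ) / n)| * w k
        ≤ L * |x - (k : ℝ) / n| ^ α / (γ + x + (k : ℝ) / n) ^ β * w k :=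
          mul_le_mul_of_nonneg_right (hf x _ hx.le hk) (hw₀ k)
      _ ≤ L * (m ^ (α / 2) * (1 + α / 2 * ((x - (k : ℝ) / n) ^ 2 / m - 1)))
            / (γ + x) ^ β * w k := by
          have htan := abs_rpow_le_tangent hα.le (by linarith) hm (x - (k : ℝ) / n)
          have hden : (γ + x) ^ β ≤ (γ + x + (k : ℝ) / n) ^ β :=
            Real.rpow_le_rpow (by positivity) (by linarith) hβ
          have hpos : 0 < (γ + x) ^ β := by positivity
          have hnum := mul_le_mul_of_nonneg_left htan hL.le
          refine mul_le_mul_of_nonneg_right (div_le_div₀ ?_ hnum hpos hden) (hw₀ k)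
          exact le_trans (by positivity) hnum
      _ = _ := by
          rw [hC_def]
          ring
  have hsum : HasSum (fun k : ℕ ↦
      C * ((1 - α / 2) * w k + α / 2 * ((x - (k : ℝ) / n) ^ 2 / m * w k))) C := by
    refine HasSum.congr_of_eq (((hw.mul_left (1 - α / 2)).add (hvar.mul_left (α / 2))).mul_left C)
      (fun k ↦ rfl) ?_
    ring
  have hdiff : Summable fun k : ℕ ↦ (f x - f ((k : ℝ) / n)) * w k :=
    .of_norm_bounded hsum.summable hbound
  have hS : HasSum (fun k : ℕ ↦ f ((k : ℝ) / n) * w k)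
      (f x - ∑' k : ℕ, (f x - f ((k : ℝ) / n)) * w k) := by
    refine HasSum.congr_of_eq ((hw.mul_left (f x)).sub hdiff.hasSum) (fun k ↦ ?_) ?_
    · ring
    · ring
  rw [hS.tsum_eq, sub_sub_cancel]
  exact tsum_of_norm_bounded hsum hbound
end

section
/- Let f : [0,∞) → ℝ satisfy |f(x) − f(y)| ≤ L|x − y|^α/(x + y)^{α/2} for all x, y ∈ [0,∞), with L > 0 and α ∈ (0,1] (the general Hölder-type condition with γ = 0 and β = α/2). Then for all n ≥ 1 and uniformly for all x ∈ (0,∞), the Szász-Mirakjan operator satisfies |f(x) − S_n(f;x)| ≤ L/n^{α/2}. -/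
/-- The Poisson weights of mean `m` sum to one. -/
lemma hasSum_poisson_weight (m : ℝ) :
    HasSum (fun k : ℕ => Real.exp (-m) * m ^ k / k.factorial) 1 := by
  have h := (NormedSpace.expSeries_div_hasSum_exp (𝔸 := ℝ) m).mul_left (Real.exp (-m))
  rw [← Real.exp_eq_exp_ℝ, ← Real.exp_add, neg_add_cancel, Real.exp_zero] at h
  simpa only [mul_div_assoc] using h

lemma poisson_weight_succ (m : ℝ) (k : ℕ) :
    ((k + 1 : ℕ) : ℝ) * (Real.exp (-m) * m ^ (k + 1) / (k + 1).factorial)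
      = m * (Real.exp (-m) * m ^ k / k.factorial) := by
  rw [Nat.factorial_succ]
  push_cast
  field_simp
  ring

/-- The mean of the Poisson distribution. -/
lemma hasSum_poisson_mean (m : ℝ) :
    HasSum (fun k : ℕ => (k : ℝ) * (Real.exp (-m) * m ^ k / k.factorial)) m := by
  rw [← hasSum_nat_add_iff' 1]
  simpa [-Nat.cast_add, poisson_weight_succ] using (hasSum_poisson_weight m).mul_left m

/-- The second moment of the Poisson distribution. -/
lemma hasSum_poisson_second_moment (m : ℝ) :
    HasSum (fun k : ℕ => (k : ℝ) ^ 2 * (Real.exp (-m) * m ^ k / k.factorial)) (m * (m + 1)) := by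
  rw [← hasSum_nat_add_iff' 1]
  convert ((hasSum_poisson_mean m).add (hasSum_poisson_weight m)).mul_left m using 1
  · rfl
  · ext k
    rw [sq, mul_assoc, poisson_weight_succ]
    push_cast
    ring
  · simp

/-- The normalized variance of the Poisson distribution. -/
lemma hasSum_poisson_variance {m : ℝ} (hm : m ≠ 0) :
    HasSum (fun k : ℕ => ((k : ℝ) - m) ^ 2 / m * (Real.exp (-m) * m ^ k / k.factorial)) 1 := by
  convert (((hasSum_poisson_second_moment m).sub ((hasSum_poisson_mean m).mul_left (2 * m))).add
    ((hasSum_poisson_weight m).mul_left (m ^ 2))).div_const m using 1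
  · rfl
  · ext k
    ring
  · field_simp
    ring

/-- An average against probability weights `w` stays within `C` of `a` when the deviation of each
term is at most `C * (1 + p * (t - 1))` and `t` has mean one. -/
lemma abs_sub_tsum_le_of_mean_one {ι : Type*} {w t g : ι → ℝ} {a C p : ℝ}
    (hw0 : ∀ k, 0 ≤ w k) (hw : HasSum w 1) (ht : HasSum (fun k => t k * w k) 1)
    (hg : ∀ k, |a - g k| ≤ C * (1 + p * (t k - 1))) :
    |a - ∑' k, g k * w k| ≤ C := by
  have hbound : HasSum (fun k => C * (1 + p * (t k - 1)) * w k) C := by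
    convert (hw.add ((ht.sub hw).mul_left p)).mul_left C using 1
    · rfl
    · ext k
      ring
    · ring
  have hle : ∀ k, ‖(a - g k) * w k‖ ≤ C * (1 + p * (t k - 1)) * w k := fun k => by
    rw [norm_mul, Real.norm_eq_abs, Real.norm_of_nonneg (hw0 k)]
    exact mul_le_mul_of_nonneg_right (hg k) (hw0 k)
  have hdev : Summable fun k => (a - g k) * w k := .of_norm_bounded hbound.summable hle
  have hsum : HasSum (fun k => g k * w k) (a - ∑' k, (a - g k) * w k) := by
    convert (hw.mul_left a).sub hdev.hasSum using 1
    · rfl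
    · ext k
      ring
    · ring
  rw [hsum.tsum_eq, sub_sub_cancel, ← Real.norm_eq_abs]
  exact tsum_of_norm_bounded hbound hle

/-- The Hölder modulus at `x` and `y / n`, bounded linearly in the normalized squared deviation. -/
lemma holder_modulus_le {α n x y : ℝ} (hα : 0 ≤ α) (hα2 : α ≤ 2) (hn : 0 < n) (hx : 0 < x)
    (hy : 0 ≤ y) :
    |x - y / n| ^ α / (x + y / n) ^ (α / 2)
      ≤ 1 / n ^ (α / 2) * (1 + α / 2 * ((y - n * x) ^ 2 / (n * x) - 1)) := by
  have hyn : 0 ≤ y / n := by positivity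
  have hp : 0 ≤ α / 2 := by positivity
  calc |x - y / n| ^ α / (x + y / n) ^ (α / 2)
      ≤ |x - y / n| ^ α / x ^ (α / 2) := by
        gcongr
        linarith
    _ = 1 / n ^ (α / 2) * ((y - n * x) ^ 2 / (n * x)) ^ (α / 2) := by
        have hsq : |x - y / n| ^ α = ((x - y / n) ^ 2) ^ (α / 2) := by
          rw [← sq_abs, ← Real.rpow_natCast, ← Real.rpow_mul (abs_nonneg _)]
          congr 1
          push_cast
          ring
        rw [hsq, ← Real.div_rpow (sq_nonneg _) hx.le, one_div, ← Real.inv_rpow hn.le,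
          ← Real.mul_rpow (by positivity) (by positivity)]
        congr 1
        field_simp
        ring
    _ ≤ _ := by
        have hs : -1 ≤ (y - n * x) ^ 2 / (n * x) - 1 := by
          have : 0 ≤ (y - n * x) ^ 2 / (n * x) := by positivity
          linarith
        have h := rpow_one_add_le_one_add_mul_self hs hp (by linarith)
        rw [add_sub_cancel] at h
        gcongr

/-- Uniform error bound for the Szász-Mirakjan operator for a function satisfying the general
Hölder-type condition with `γ = 0` and `β = α/2`: `|f(x) - S_n(f;x)| ≤ L / n^(α/2)`. -/
theorem szasz_mirakjan_uniform_bound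
    (f : ℝ → ℝ) (L α : ℝ) (hL : 0 < L) (hα : 0 < α) (hα1 : α ≤ 1)
    (hf : ∀ y z : ℝ, 0 ≤ y → 0 ≤ z →
      |f y - f z| ≤ L * |y - z| ^ α / (y + z) ^ (α / 2))
    (n : ℕ) (hn : 1 ≤ n) (x : ℝ) (hx : 0 < x) :
    |f x - ∑' (k : ℕ), f ((k : ℝ) / n) * (Real.exp (-(n * x)) * (n * x) ^ k / k.factorial)|
      ≤ L / (n : ℝ) ^ (α / 2) := by
  have hn0 : (0 : ℝ) < n := by exact_mod_cast hn
  have hm : 0 < (n : ℝ) * x := by positivity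
  refine abs_sub_tsum_le_of_mean_one (p := α / 2) (fun k => by positivity)
    (hasSum_poisson_weight _) (hasSum_poisson_variance hm.ne') fun k => ?_
  have h := mul_le_mul_of_nonneg_left
    (holder_modulus_le hα.le (by linarith) hn0 hx k.cast_nonneg) hL.le
  rw [← mul_div_assoc, ← mul_assoc, mul_one_div] at h
  exact (hf x (k / n) hx.le (by positivity)).trans h
end

section
/- Let f : [0,∞) → ℝ satisfy the general Hölder-type condition |f(x) − f(y)| ≤ L|x − y|^α/(γ + x + y)^β for all x, y ∈ [0,∞), with L > 0, α ∈ (0,1], β, γ ∈ [0,∞). Then for all n ≥ 1 and all x ∈ (0,∞), the Baskakov operator satisfies |f(x) − S_n(f;x)| ≤ (L/n^{α/2}) · (x(x+1))^{α/2}/(γ + x)^β. -/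
/-- The probability of `k` under the Pascal distribution with parameters `n` and `x`. -/
noncomputable def pascalWeight (n : ℕ) (x : ℝ) (k : ℕ) : ℝ :=
  ((n + k - 1).choose k : ℝ) * x ^ k / (1 + x) ^ (n + k)

lemma pascalWeight_nonneg (n : ℕ) {x : ℝ} (hx : 0 < x) (k : ℕ) : 0 ≤ pascalWeight n x k := by
  unfold pascalWeight
  positivity

lemma hasSum_pascalWeight {n : ℕ} (hn : 1 ≤ n) {x : ℝ} (hx : 0 < x) :
    HasSum (pascalWeight n x) 1 := by
  obtain ⟨m, rfl⟩ := Nat.exists_eq_add_of_le' hn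
  have hr : ‖x / (1 + x)‖ < 1 := by
    rw [Real.norm_of_nonneg (by positivity), div_lt_one (by positivity)]
    linarith
  have h := (hasSum_choose_mul_geometric_of_norm_lt_one m hr).mul_left (1 / (1 + x) ^ (m + 1))
  have hone : 1 - x / (1 + x) = 1 / (1 + x) := by field_simp; ring
  convert! h using 1
  · ext k
    have hchoose : (m + 1 + k - 1).choose k = (k + m).choose m := by
      rw [show m + 1 + k - 1 = k + m by omega, Nat.choose_symm_add]
    rw [pascalWeight, hchoose, div_pow, pow_add]
    field_simp
  · rw [hone, one_div_pow]
    field_simp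

lemma succ_mul_pascalWeight_succ (n : ℕ) (x : ℝ) (k : ℕ) :
    ((k + 1 : ℕ) : ℝ) * pascalWeight n x (k + 1) = n * x * pascalWeight (n + 1) x k := by
  have hchoose : (k + 1) * (n + k).choose (k + 1) = n * (n + k).choose k := by
    have h := Nat.choose_succ_right_eq (n + k) k
    rw [Nat.add_sub_cancel] at h
    rw [mul_comm, h, mul_comm]
  have hcast : ((k + 1 : ℕ) : ℝ) * ((n + k).choose (k + 1) : ℝ) = n * ((n + k).choose k : ℝ) := by
    exact_mod_cast hchoose
  simp only [pascalWeight]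
  rw [show n + (k + 1) - 1 = n + k by omega, show n + 1 + k - 1 = n + k by omega,
    show n + 1 + k = n + (k + 1) by omega, ← mul_div_assoc, ← mul_assoc, hcast]
  ring

/-- Size-biasing turns the Pascal distribution with parameter `n` into the one with parameter
`n + 1`, shifted by one. -/
lemma hasSum_natCast_mul_pascalWeight_mul {n : ℕ} {x : ℝ} {g : ℕ → ℝ} {s : ℝ}
    (h : HasSum (fun k ↦ pascalWeight (n + 1) x k * g (k + 1)) s) :
    HasSum (fun k : ℕ ↦ (k : ℝ) * pascalWeight n x k * g k) (n * x * s) := by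
  rw [← hasSum_nat_add_iff' 1]
  simp only [Finset.sum_range_one, Nat.cast_zero, zero_mul, sub_zero]
  simp_rw [succ_mul_pascalWeight_succ n x, mul_assoc (n * x)]
  exact h.mul_left _

lemma hasSum_natCast_mul_pascalWeight (n : ℕ) {x : ℝ} (hx : 0 < x) :
    HasSum (fun k : ℕ ↦ (k : ℝ) * pascalWeight n x k) (n * x) := by
  have h := hasSum_natCast_mul_pascalWeight_mul (n := n) (x := x) (g := fun _ ↦ 1) (s := 1)
    (by simpa using hasSum_pascalWeight (Nat.le_add_left 1 n) hx)
  simpa only [mul_one] using h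

lemma hasSum_natCast_mul_pascalWeight_mul_natCast (n : ℕ) {x : ℝ} (hx : 0 < x) :
    HasSum (fun k : ℕ ↦ (k : ℝ) * pascalWeight n x k * k) (n * x * ((n + 1) * x + 1)) := by
  refine hasSum_natCast_mul_pascalWeight_mul (g := fun k ↦ (k : ℝ)) ?_
  convert! (hasSum_natCast_mul_pascalWeight (n + 1) hx).add
    (hasSum_pascalWeight (Nat.le_add_left 1 n) hx) using 1
  · ext k
    push_cast
    ring
  · push_cast
    ring

lemma hasSum_sq_sub_mul_pascalWeight {n : ℕ} (hn : 1 ≤ n) {x : ℝ} (hx : 0 < x) :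
    HasSum (fun k : ℕ ↦ (x - k / n) ^ 2 * pascalWeight n x k) (x * (x + 1) / n) := by
  have hn0 : (n : ℝ) ≠ 0 := by positivity
  convert! (((hasSum_natCast_mul_pascalWeight_mul_natCast n hx).mul_left (1 / (n : ℝ) ^ 2)).add
    ((hasSum_natCast_mul_pascalWeight n hx).mul_left (-2 * x / n))).add
    ((hasSum_pascalWeight hn hx).mul_left (x ^ 2)) using 1
  · ext k
    field_simp
    ring
  · field_simp
    ring

/-- The concave function `t ↦ t ^ a` lies below its tangent line at `v`. -/
lemma rpow_le_tangent {a t v : ℝ} (ha : 0 ≤ a) (ha1 : a ≤ 1) (ht : 0 ≤ t) (hv : 0 < v) :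
    t ^ a ≤ v ^ a * (a * (t / v) + (1 - a)) := by
  have h := Real.geom_mean_le_arith_mean2_weighted ha (sub_nonneg.2 ha1)
    (div_nonneg ht hv.le) zero_le_one (by ring)
  rw [Real.one_rpow, mul_one, mul_one, Real.div_rpow ht hv.le, div_le_iff₀' (by positivity)] at h
  exact h

/-- Error bound for the Baskakov operator for a function satisfying the general Hölder-type
condition: `|f(x) - S_n(f;x)| ≤ (L / n^(α/2)) · (x(x+1))^(α/2) / (γ + x)^β`. -/
theorem baskakov_general_holder
    (f : ℝ → ℝ) (L α β γ : ℝ) (hL : 0 < L) (hα : 0 < α) (hα1 : α ≤ 1)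
    (hβ : 0 ≤ β) (hγ : 0 ≤ γ)
    (hf : ∀ y z : ℝ, 0 ≤ y → 0 ≤ z →
      |f y - f z| ≤ L * |y - z| ^ α / (γ + y + z) ^ β)
    (n : ℕ) (hn : 1 ≤ n) (x : ℝ) (hx : 0 < x) :
    |f x - ∑' (k : ℕ), f ((k : ℝ) / n) *
        (((n + k - 1).choose k : ℝ) * x ^ k / (1 + x) ^ (n + k))|
      ≤ L / (n : ℝ) ^ (α / 2) * (x * (x + 1)) ^ (α / 2) / (γ + x) ^ β := by
  have hn0 : (0 : ℝ) < n := by exact_mod_cast hn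
  set v := x * (x + 1) / n with hv
  have hv0 : 0 < v := by positivity
  set C := L / (γ + x) ^ β with hC
  have hC0 : 0 ≤ C := by positivity
  have hmass := hasSum_pascalWeight hn hx
  set B : ℕ → ℝ := fun k ↦
    C * v ^ (α / 2) * (α / 2 / v * ((x - k / n) ^ 2 * pascalWeight n x k)
      + (1 - α / 2) * pascalWeight n x k) with hB
  have hBsum : HasSum B (C * v ^ (α / 2)) := by
    convert! (((hasSum_sq_sub_mul_pascalWeight hn hx).mul_left (α / 2 / v)).add
      (hmass.mul_left (1 - α / 2))).mul_left (C * v ^ (α / 2)) using 1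
    rw [← hv]
    field_simp
    ring
  have hle (k : ℕ) : ‖(f x - f (k / n)) * pascalWeight n x k‖ ≤ B k := by
    have hk : (0 : ℝ) ≤ k / n := by positivity
    have hbase : 0 < γ + x := by positivity
    have hpow : |x - k / n| ^ α = ((x - k / n) ^ 2) ^ (α / 2) := by
      rw [← sq_abs, ← Real.rpow_natCast_mul (abs_nonneg _)]
      congr 1
      push_cast
      ring
    have hholder : |f x - f (k / n)| ≤ C * ((x - k / n) ^ 2) ^ (α / 2) :=
      calc |f x - f (k / n)| ≤ L * |x - k / n| ^ α / (γ + x + k / n) ^ β := hf _ _ hx.le hk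
        _ ≤ L * |x - k / n| ^ α / (γ + x) ^ β := by
          refine div_le_div_of_nonneg_left (by positivity) (by positivity) ?_
          exact Real.rpow_le_rpow hbase.le (by linarith) hβ
        _ = C * ((x - k / n) ^ 2) ^ (α / 2) := by rw [hpow, hC]; ring
    have htangent := rpow_le_tangent (a := α / 2) (by positivity) (by linarith)
      (sq_nonneg (x - k / n)) hv0
    rw [norm_mul, Real.norm_eq_abs, Real.norm_of_nonneg (pascalWeight_nonneg n hx k)]
    calc |f x - f (k / n)| * pascalWeight n x k
        ≤ C * (v ^ (α / 2) * (α / 2 * ((x - k / n) ^ 2 / v) + (1 - α / 2)))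
          * pascalWeight n x k :=
          mul_le_mul_of_nonneg_right (hholder.trans (mul_le_mul_of_nonneg_left htangent hC0))
            (pascalWeight_nonneg n hx k)
      _ = B k := by rw [hB]; ring
  have hsum : Summable fun k : ℕ ↦ (f x - f (k / n)) * pascalWeight n x k :=
    hBsum.summable.of_norm_bounded hle
  have hdiff : HasSum (fun k : ℕ ↦ f (k / n) * pascalWeight n x k)
      (f x * 1 - ∑' k : ℕ, (f x - f (k / n)) * pascalWeight n x k) := by
    convert! (hmass.mul_left (f x)).sub hsum.hasSum using 2
    ring
  have hrhs : L / (n : ℝ) ^ (α / 2) * (x * (x + 1)) ^ (α / 2) / (γ + x) ^ β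
      = C * v ^ (α / 2) := by
    rw [hv, Real.div_rpow (by positivity) hn0.le, hC]
    ring
  have htsum := hdiff.tsum_eq
  simp only [pascalWeight] at htsum
  rw [htsum, hrhs, mul_one, sub_sub_cancel]
  exact tsum_of_norm_bounded hBsum hle
end

section
/- Let f : [0,∞) → ℝ satisfy |f(x) − f(y)| ≤ L|x − y|^α/(x + y)^{α/2} for all x, y ∈ [0,∞), with L > 0 and α ∈ (0,1] (the general Hölder-type condition with γ = 0 and β = α/2). Then for all n ≥ 1 and all x ∈ (0,∞), the Baskakov operator satisfies |f(x) − S_n(f;x)| ≤ L · ((x+1)/n)^{α/2}. -/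
/-- The Baskakov basis functions `C(n+k-1, k) x^k / (1+x)^(n+k)`, for `n = m + 1`. -/
noncomputable def baskakovWeight (m : ℕ) (x : ℝ) (k : ℕ) : ℝ :=
  ((m + 1 + k - 1).choose k : ℝ) * x ^ k / (1 + x) ^ (m + 1 + k)

lemma baskakovWeight_nonneg (m : ℕ) {x : ℝ} (hx : 0 ≤ x) (k : ℕ) :
    0 ≤ baskakovWeight m x k := by
  unfold baskakovWeight
  positivity

/-- The Baskakov basis functions sum to one. -/
lemma hasSum_baskakovWeight (m : ℕ) {x : ℝ} (hx : 0 ≤ x) :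
    HasSum (baskakovWeight m x) 1 := by
  have h1 : 0 < 1 + x := by linarith
  have hq : ‖x / (1 + x)‖ < 1 := by
    rw [Real.norm_of_nonneg (by positivity), div_lt_one h1]
    linarith
  have hs := (hasSum_choose_mul_geometric_of_norm_lt_one m hq).mul_left (((1 + x) ^ (m + 1))⁻¹)
  have hsub : 1 - x / (1 + x) = (1 + x)⁻¹ := by
    field_simp
    ring
  convert hs using 1
  · rfl
  · funext k
    have hc : (m + 1 + k - 1).choose k = (k + m).choose m := by
      rw [show m + 1 + k - 1 = k + m by omega, Nat.choose_symm_add]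
    rw [baskakovWeight, hc, div_pow, pow_add]
    field_simp
  · rw [hsub, inv_pow]
    field_simp

lemma add_mul_baskakovWeight (m : ℕ) {x : ℝ} (hx : 0 ≤ x) (k : ℕ) :
    ((k : ℝ) + m + 1) * baskakovWeight m x k =
      ((m : ℝ) + 1) * (1 + x) * baskakovWeight (m + 1) x k := by
  have h1 : 0 < 1 + x := by linarith
  have hc : (k + m + 1) * (m + k).choose k = (m + 1) * (m + 1 + k).choose k := by
    have h := Nat.add_one_mul_choose_eq (k + m) m
    rw [Nat.choose_symm_add.symm, add_comm k m] at h
    rw [show m + 1 + k = m + k + 1 by omega, add_comm k m, h,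
      show m + k + 1 = k + (m + 1) by omega, Nat.choose_symm_add, mul_comm]
  have hc' : ((k : ℝ) + m + 1) * ((m + k).choose k : ℝ) =
      ((m : ℝ) + 1) * ((m + 1 + k).choose k : ℝ) := by exact_mod_cast hc
  unfold baskakovWeight
  rw [show m + 1 + k - 1 = m + k by omega, show m + 1 + 1 + k - 1 = m + 1 + k by omega,
    show m + 1 + 1 + k = m + 1 + k + 1 by omega, pow_succ]
  field_simp
  linear_combination x ^ k * hc'

/-- The second central moment of the Baskakov operator. -/
lemma hasSum_sq_mul_baskakovWeight (m : ℕ) {x : ℝ} (hx : 0 ≤ x) :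
    HasSum (fun k : ℕ => (x - (k : ℝ) / (m + 1)) ^ 2 * baskakovWeight m x k)
      (x * (1 + x) / (m + 1)) := by
  have s0 := hasSum_baskakovWeight m hx
  have s1 := (hasSum_baskakovWeight (m + 1) hx).mul_left (((m : ℝ) + 1) * (1 + x))
  have s2 := (hasSum_baskakovWeight (m + 2) hx).mul_left
    (((m : ℝ) + 1) * (1 + x) * (((m : ℝ) + 2) * (1 + x)))
  have hs := ((s2.sub (s1.mul_left (1 + 2 * (m + 1) * (1 + x)))).add
    (s0.mul_left (((m + 1) * (1 + x)) ^ 2))).mul_left ((((m : ℝ) + 1) ^ 2)⁻¹)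
  have hm : (m : ℝ) + 1 ≠ 0 := by positivity
  convert hs using 1
  · rfl
  · funext k
    have e1 := add_mul_baskakovWeight m hx k
    have e2 := add_mul_baskakovWeight (m + 1) hx k
    push_cast at e2
    field_simp
    linear_combination (k + 1 - 2 * (m + 1) * (1 + x) + m : ℝ) * e1 +
      ((m : ℝ) + 1) * (1 + x) * e2
  · field_simp
    ring

/-- A concave power lies below its tangent line. -/
lemma rpow_le_tangent_s10 {u c p : ℝ} (hu : 0 ≤ u) (hc : 0 < c) (hp : 0 ≤ p) (hp1 : p ≤ 1) :
    u ^ p ≤ c ^ p * (1 - p) + c ^ p * p / c * u := by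
  have h := rpow_one_add_le_one_add_mul_self (s := u / c - 1)
    (by have := div_nonneg hu hc.le; linarith) hp hp1
  rw [add_sub_cancel, Real.div_rpow hu hc.le, div_le_iff₀ (Real.rpow_pos_of_pos hc p)] at h
  calc u ^ p ≤ _ := h
    _ = _ := by field_simp; ring

lemma rpow_div_add_rpow_le {x y α : ℝ} (hx : 0 < x) (hy : 0 ≤ y) (hα : 0 ≤ α) :
    |x - y| ^ α / (x + y) ^ (α / 2) ≤ ((x - y) ^ 2 / x) ^ (α / 2) := by
  have h : |x - y| ^ α = ((x - y) ^ 2) ^ (α / 2) := by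
    rw [← sq_abs, ← Real.rpow_natCast, ← Real.rpow_mul (abs_nonneg _)]
    congr 1
    push_cast
    ring
  rw [h, ← Real.div_rpow (by positivity) (by positivity)]
  gcongr
  linarith

/-- Error bound for the Baskakov operator for a function satisfying the general Hölder-type
condition with `γ = 0` and `β = α/2`: `|f(x) - S_n(f;x)| ≤ L · ((x+1)/n)^(α/2)`. -/
theorem baskakov_gamma_zero_bound
    (f : ℝ → ℝ) (L α : ℝ) (hL : 0 < L) (hα : 0 < α) (hα1 : α ≤ 1)
    (hf : ∀ y z : ℝ, 0 ≤ y → 0 ≤ z →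
      |f y - f z| ≤ L * |y - z| ^ α / (y + z) ^ (α / 2))
    (n : ℕ) (hn : 1 ≤ n) (x : ℝ) (hx : 0 < x) :
    |f x - ∑' (k : ℕ), f ((k : ℝ) / n) *
        (((n + k - 1).choose k : ℝ) * x ^ k / (1 + x) ^ (n + k))|
      ≤ L * ((x + 1) / n) ^ (α / 2) := by
  obtain ⟨m, rfl⟩ : ∃ m, n = m + 1 := ⟨n - 1, by omega⟩
  change |f x - ∑' k : ℕ, f ((k : ℝ) / (m + 1 : ℕ)) * baskakovWeight m x k| ≤ _
  push_cast
  set c : ℝ := (x + 1) / (m + 1) with hc_def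
  have hc : 0 < c := by positivity
  have s0 := hasSum_baskakovWeight m hx.le
  have hbound : HasSum (fun k : ℕ => L * (c ^ (α / 2) * (1 - α / 2) * baskakovWeight m x k +
      c ^ (α / 2) * (α / 2) / c / x *
        ((x - (k : ℝ) / (m + 1)) ^ 2 * baskakovWeight m x k))) (L * c ^ (α / 2)) := by
    convert ((s0.mul_left (c ^ (α / 2) * (1 - α / 2))).add
      ((hasSum_sq_mul_baskakovWeight m hx.le).mul_left
        (c ^ (α / 2) * (α / 2) / c / x))).mul_left L using 1
    · rfl
    have : x * (1 + x) / (m + 1) = x * c := by rw [hc_def]; ring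
    rw [this]
    field_simp
    ring
  have hterm : ∀ k : ℕ, ‖(f x - f ((k : ℝ) / (m + 1))) * baskakovWeight m x k‖ ≤
      L * (c ^ (α / 2) * (1 - α / 2) * baskakovWeight m x k +
      c ^ (α / 2) * (α / 2) / c / x *
        ((x - (k : ℝ) / (m + 1)) ^ 2 * baskakovWeight m x k)) := by
    intro k
    have hw := baskakovWeight_nonneg m hx.le k
    have hk : (0 : ℝ) ≤ (k : ℝ) / (m + 1) := by positivity
    rw [norm_mul, Real.norm_of_nonneg hw, Real.norm_eq_abs]
    calc |f x - f ((k : ℝ) / (m + 1))| * baskakovWeight m x k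
        ≤ L * (c ^ (α / 2) * (1 - α / 2) +
            c ^ (α / 2) * (α / 2) / c * ((x - (k : ℝ) / (m + 1)) ^ 2 / x)) *
            baskakovWeight m x k := by
          gcongr
          refine (hf x _ hx.le hk).trans ?_
          rw [mul_div_assoc]
          gcongr
          exact (rpow_div_add_rpow_le hx hk hα.le).trans
            (rpow_le_tangent_s10 (by positivity) hc (by linarith) (by linarith))
      _ = _ := by ring
  have hsum := Summable.of_norm_bounded hbound.summable hterm
  have hS : HasSum (fun k : ℕ => f ((k : ℝ) / (m + 1)) * baskakovWeight m x k)
      (f x - ∑' k : ℕ, (f x - f ((k : ℝ) / (m + 1))) * baskakovWeight m x k) := by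
    convert (s0.mul_left (f x)).sub hsum.hasSum using 1
    · rfl
    · funext k
      ring
    · ring
  rw [hS.tsum_eq, sub_sub_cancel]
  exact tsum_of_norm_bounded hbound hterm
end
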